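/- There exist constants ε₀ ∈ (0,1) and C > 0 with the following property. Let ν ∈ (0,1], k ∈ ℤ with |k| ≥ 1 and νk² ≤ 1, ε ∈ (0, ε₀], λ ∈ ℝ, and set δ = ν^{1/3}|k|^{−1/3}. Let w : [−1,1] → ℂ be twice continuously differentiable with w(−1) = w(1) = 0, let F(y) = −ν(w''(y) − k²w(y)) + ik(y−λ)w(y) − ε·ν^{1/3}|k|^{2/3}w(y), and let M ≥ 0 dominate F in H^{−1}. Define χ : [−1,1] → ℝ by χ(y) = 1/(y−λ) when |y−λ| ≥ δ and χ(y) = 2(y−λ)/δ² − (y−λ)³/δ⁴ when |y−λ| < δ. Let j ∈ {1,−1} and let f : [−1,1] → ℂ be continuously differentiable with f(−j) = 0. Then |⟨w,f⟩| ≤ C|k|^{−1}M·( δ^{−3/2}·sup_{y∈(−1,1)∩(λ−δ,λ+δ)}|f(y)| + |f(j)|·(|j−λ|+δ)^{−3/4}·δ^{−3/4} + (‖fχ‖_{L²}² + ‖(fχ)'‖_{L²}²)^{1/2} + δ^{−1}‖fχ‖_{L²} ), where the supremum is taken to be 0 if (−1,1)∩(λ−δ,λ+δ) is empty. -/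

import Mathlib

/-- The `L²` norm of a function on the interval `[-1,1]`. -/
noncomputable def nL2 (f : ℝ → ℂ) : ℝ :=
  (∫ y in Set.Icc (-1:ℝ) 1, ‖f y‖ ^ 2) ^ ((1:ℝ)/2)

/-- The `L²` pairing of two functions on the interval `[-1,1]`. -/
noncomputable def innI (f g : ℝ → ℂ) : ℂ :=
  ∫ y in Set.Icc (-1:ℝ) 1, f y * (starRingEnd ℂ) (g y)

/-- `M ≥ 0` dominates `F` in `H^{-1}` : `|⟨F, φ⟩| ≤ M ‖φ‖_{H¹}` for every `C¹` function
vanishing at `±1`. -/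
def Dominates (F : ℝ → ℂ) (M : ℝ) : Prop :=
  ∀ g : ℝ → ℂ, ContDiff ℝ 1 g → g (-1) = 0 → g 1 = 0 →
    ‖innI F g‖ ≤ M * ((nL2 g ^ 2 + nL2 (deriv g) ^ 2) ^ ((1:ℝ)/2))

open MeasureTheory Set intervalIntegral

theorem innI_eq (f g : ℝ → ℂ) :
    innI f g = ∫ y in (-1:ℝ)..1, f y * (starRingEnd ℂ) (g y) := by
  unfold innI
  rw [intervalIntegral.integral_of_le (by norm_num), integral_Icc_eq_integral_Ioc]

theorem nL2_nonneg (f : ℝ → ℂ) : 0 ≤ nL2 f := by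
  unfold nL2
  apply Real.rpow_nonneg
  exact integral_nonneg (fun y => by positivity)

theorem nL2_sq (f : ℝ → ℂ) : nL2 f ^ 2 = ∫ y in (-1:ℝ)..1, ‖f y‖ ^ 2 := by
  unfold nL2
  rw [← Real.sqrt_eq_rpow, Real.sq_sqrt (integral_nonneg (fun y => by positivity)),
    intervalIntegral.integral_of_le (by norm_num), integral_Icc_eq_integral_Ioc]

theorem cs_norm {f g : ℝ → ℂ} (hf : Continuous f) (hg : Continuous g) :
    ∫ y in (-1:ℝ)..1, ‖f y‖ * ‖g y‖ ≤ nL2 f * nL2 g := by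
  have A : ∀ h : ℝ → ℂ, Continuous h →
      MemLp h (ENNReal.ofReal 2) (volume.restrict (Icc (-1:ℝ) 1)) := by
    intro h hh
    apply MemLp.mono_exponent (q := ⊤) _ le_top
    apply memLp_top_of_bound hh.aestronglyMeasurable
    swap
    · exact (isCompact_Icc.exists_bound_of_continuousOn (s := Icc (-1:ℝ) 1) hh.continuousOn).choose
    · filter_upwards [ae_restrict_mem measurableSet_Icc] with y hy
      exact (isCompact_Icc.exists_bound_of_continuousOn (s := Icc (-1:ℝ) 1) hh.continuousOn).choose_spec y hy
  have := integral_mul_norm_le_Lp_mul_Lq (μ := volume.restrict (Icc (-1:ℝ) 1))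
    (Real.HolderConjugate.two_two) (A f hf) (A g hg)
  rw [intervalIntegral.integral_of_le (by norm_num), ← integral_Icc_eq_integral_Ioc]
  simpa [nL2] using this

theorem cs_innI {f g : ℝ → ℂ} (hf : Continuous f) (hg : Continuous g) :
    ‖innI f g‖ ≤ nL2 f * nL2 g := by
  refine le_trans ?_ (cs_norm hf hg)
  rw [innI_eq]
  refine (intervalIntegral.norm_integral_le_integral_norm (by norm_num)).trans (le_of_eq ?_)
  simp

theorem nL2_mono {f g : ℝ → ℂ} (hf : Continuous f) (hg : Continuous g)
    (h : ∀ y ∈ Icc (-1:ℝ) 1, ‖f y‖ ≤ ‖g y‖) : nL2 f ≤ nL2 g := by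
  apply le_of_sq_le_sq _ (nL2_nonneg g)
  rw [nL2_sq, nL2_sq]
  apply intervalIntegral.integral_mono_on (by norm_num)
  · exact (hf.norm.pow 2).intervalIntegrable _ _
  · exact (hg.norm.pow 2).intervalIntegrable _ _
  · intro y hy
    exact pow_le_pow_left₀ (norm_nonneg _) (h y hy) 2

theorem nL2_add {f g : ℝ → ℂ} (hf : Continuous f) (hg : Continuous g) :
    nL2 (fun y => f y + g y) ≤ nL2 f + nL2 g := by
  apply le_of_sq_le_sq _ (add_nonneg (nL2_nonneg f) (nL2_nonneg g))
  have h1 : nL2 (fun y => f y + g y) ^ 2 ≤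
      ∫ y in (-1:ℝ)..1, (‖f y‖ ^ 2 + 2 * (‖f y‖ * ‖g y‖) + ‖g y‖ ^ 2) := by
    rw [nL2_sq]
    apply intervalIntegral.integral_mono_on (by norm_num)
    · exact Continuous.intervalIntegrable (by fun_prop) _ _
    · exact Continuous.intervalIntegrable (by fun_prop) _ _
    · intro y hy
      nlinarith [norm_add_le (f y) (g y), norm_nonneg (f y + g y), norm_nonneg (f y),
        norm_nonneg (g y)]
  rw [intervalIntegral.integral_add (Continuous.intervalIntegrable (by fun_prop) _ _)
    (Continuous.intervalIntegrable (by fun_prop) _ _),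
    intervalIntegral.integral_add (Continuous.intervalIntegrable (by fun_prop) _ _)
    (Continuous.intervalIntegrable (by fun_prop) _ _),
    intervalIntegral.integral_const_mul, ← nL2_sq, ← nL2_sq] at h1
  nlinarith [cs_norm hf hg]

theorem nL2_smul (c : ℂ) (f : ℝ → ℂ) : nL2 (fun y => c * f y) = ‖c‖ * nL2 f := by
  have : nL2 (fun y => c * f y) ^ 2 = (‖c‖ * nL2 f) ^ 2 := by
    rw [mul_pow, nL2_sq, nL2_sq, ← intervalIntegral.integral_const_mul]
    simp [mul_pow]
  exact (pow_left_inj₀ (nL2_nonneg _) (mul_nonneg (norm_nonneg _) (nL2_nonneg _))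
    (by norm_num)).1 this

theorem nL2_supp {g : ℝ → ℂ} {c r B : ℝ} (hr : 0 ≤ r)
    (h1 : ∀ y ∈ Icc (-1:ℝ) 1, ‖g y‖ ≤ B)
    (h2 : ∀ y ∈ Icc (-1:ℝ) 1, r < |y - c| → g y = 0) : nL2 g ^ 2 ≤ B ^ 2 * (2 * r) := by
  have hB : 0 ≤ B := (norm_nonneg _).trans (h1 0 (by norm_num))
  rw [nL2_sq, intervalIntegral.integral_of_le (by norm_num), ← integral_Icc_eq_integral_Ioc]
  have e : ∫ y in Icc (-1:ℝ) 1, ‖g y‖ ^ 2 = ∫ y in Icc (-1:ℝ) 1 ∩ Icc (c - r) (c + r), ‖g y‖ ^ 2 := by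
    apply setIntegral_eq_of_subset_of_forall_sdiff_eq_zero measurableSet_Icc inter_subset_left
    intro y hy
    have : r < |y - c| := by
      by_contra hh
      rw [not_lt, abs_le] at hh
      exact hy.2 ⟨hy.1, by constructor <;> linarith⟩
    simp [h2 y hy.1 this]
  rw [e]
  have hfin : volume (Icc (-1:ℝ) 1 ∩ Icc (c - r) (c + r)) < ⊤ :=
    (measure_mono inter_subset_left).trans_lt (by simp)
  have := norm_setIntegral_le_of_norm_le_const (f := fun y => ‖g y‖ ^ 2) (C := B ^ 2) hfin
    (fun y hy => by
      rw [Real.norm_of_nonneg (by positivity)]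
      exact pow_le_pow_left₀ (norm_nonneg _) (h1 y hy.1) 2)
  refine (le_abs_self _).trans (this.trans ?_)
  apply mul_le_mul_of_nonneg_left _ (by positivity)
  have h3 : volume.real (Icc (-1:ℝ) 1 ∩ Icc (c - r) (c + r)) ≤ volume.real (Icc (c - r) (c + r)) :=
    measureReal_mono inter_subset_right (by simp)
  refine h3.trans ?_
  rw [Real.volume_real_Icc_of_le (by linarith)]
  linarith

theorem ibp {u v : ℝ → ℂ} (hu : ContDiff ℝ 1 u) (hv : ContDiff ℝ 1 v)
    (h1 : v (-1) = 0) (h2 : v 1 = 0) : innI (deriv u) v = - innI u (deriv v) := by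
  rw [innI_eq, innI_eq]
  have hu' := hu.continuous_deriv le_rfl
  have hv' := hv.continuous_deriv le_rfl
  have := intervalIntegral.integral_mul_deriv_eq_deriv_mul (a := (-1:ℝ)) (b := 1)
    (u := u) (v := fun y => (starRingEnd ℂ) (v y)) (u' := deriv u)
    (v' := fun y => (starRingEnd ℂ) (deriv v y))
    (fun x _ => (hu.differentiable one_ne_zero x).hasDerivAt)
    (fun x _ => (hv.differentiable one_ne_zero x).hasDerivAt.star)
    (hu'.intervalIntegrable _ _) (Continuous.intervalIntegrable (by fun_prop) _ _)
  rw [this, h1, h2]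
  simp

theorem glue {a : ℝ} {p q p' q' : ℝ → ℝ} (hp : ∀ x ≤ a, HasDerivAt p (p' x) x)
    (hq : ∀ x, a ≤ x → HasDerivAt q (q' x) x) (h : p a = q a) (h' : p' a = q' a)
    (cp : ContinuousOn p' (Iic a)) (cq : ContinuousOn q' (Ici a)) :
    (∀ x, HasDerivAt (fun x => if x ≤ a then p x else q x) (if x ≤ a then p' x else q' x) x) ∧
    Continuous (fun x => if x ≤ a then p' x else q' x) := by
  constructor
  · intro x
    rcases lt_trichotomy x a with hx | hx | hx
    · rw [if_pos hx.le]
      apply (hp x hx.le).congr_of_eventuallyEq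
      filter_upwards [Iio_mem_nhds hx] with y hy
      exact if_pos (le_of_lt hy)
    · subst hx
      rw [if_pos le_rfl, ← hasDerivWithinAt_univ, ← Iic_union_Ici (a := x)]
      apply HasDerivWithinAt.union
      · apply (hp x le_rfl).hasDerivWithinAt.congr
        · intro y hy; exact if_pos hy
        · exact if_pos le_rfl
      · rw [h']
        apply (hq x le_rfl).hasDerivWithinAt.congr
        · intro y hy
          rcases eq_or_lt_of_le (show x ≤ y from hy) with e | e
          · subst e; simp [h]
          · exact if_neg (not_le.2 e)
        · simp [h]
    · rw [if_neg (not_le.2 hx)]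
      apply (hq x hx.le).congr_of_eventuallyEq
      filter_upwards [Ioi_mem_nhds hx] with y hy
      exact if_neg (not_le.2 hy)
  · apply continuous_if_le continuous_id continuous_const
    · exact cp
    · exact cq
    · intro x hx
      change x = a at hx
      rw [hx, h']

theorem contDiff_one_of {f f' : ℝ → ℝ} (h : ∀ x, HasDerivAt f (f' x) x) (hc : Continuous f') :
    ContDiff ℝ 1 f := by
  rw [contDiff_one_iff_deriv]
  refine ⟨fun x => (h x).differentiableAt, ?_⟩
  rwa [show deriv f = f' from funext fun x => (h x).deriv]


theorem innI_lin4 {a b c d g : ℝ → ℂ} (ha : Continuous a) (hb : Continuous b) (hc : Continuous c)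
    (hg : Continuous g) (p q r s : ℂ) (hd : d = fun y => p * a y + q * b y + r * c y + s * b y) :
    innI d g = p * innI a g + q * innI b g + r * innI c g + s * innI b g := by
  subst hd
  simp only [innI_eq]
  simp only [← intervalIntegral.integral_const_mul]
  rw [← intervalIntegral.integral_add, ← intervalIntegral.integral_add,
    ← intervalIntegral.integral_add]
  · congr 1; ext y; ring
  all_goals exact Continuous.intervalIntegrable (by fun_prop) _ _

theorem weak {ν k lam e : ℝ} {w g F : ℝ → ℂ} (hw : ContDiff ℝ 2 w) (hg : ContDiff ℝ 1 g)
    (h1 : g (-1) = 0) (h2 : g 1 = 0)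
    (hF : F = fun y : ℝ => -(ν : ℂ) * (deriv (deriv w) y - (k:ℂ)^2 * w y)
            + Complex.I * (k:ℂ) * ((y:ℂ) - (lam:ℂ)) * w y - (e : ℂ) * w y) :
    innI F g = ν * innI (deriv w) (deriv g) + (ν * k ^ 2 : ℝ) * innI w g
      + Complex.I * k * innI (fun y => ((y - lam : ℝ) : ℂ) * w y) g - e * innI w g := by
  have hw1 : ContDiff ℝ 1 (deriv w) := (contDiff_succ_iff_deriv (n := 1)).1 hw |>.2.2
  have hw2 := hw1.continuous_deriv le_rfl
  have hwc := hw.continuous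
  have hgc := hg.continuous
  rw [innI_lin4 (a := deriv (deriv w)) (b := w) (c := fun y => ((y - lam : ℝ) : ℂ) * w y)
    hw2 hwc (by fun_prop) hgc (-(ν:ℂ)) (ν * k ^ 2 : ℝ) (Complex.I * k) (-(e:ℂ)), ibp hw1 hg h1 h2]
  · ring
  · rw [hF]; ext y; push_cast; ring

theorem innI_self (w : ℝ → ℂ) : innI w w = ((nL2 w ^ 2 : ℝ) : ℂ) := by
  rw [innI_eq, nL2_sq, ← intervalIntegral.integral_ofReal]
  congr 1; ext y
  rw [Complex.mul_conj, Complex.normSq_eq_norm_sq]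

theorem innI_real (θ : ℝ → ℝ) (w : ℝ → ℂ) :
    innI (fun y => (θ y : ℂ) * w y) w = ((∫ y in (-1:ℝ)..1, θ y * ‖w y‖ ^ 2 : ℝ) : ℂ) := by
  rw [innI_eq, ← intervalIntegral.integral_ofReal]
  congr 1; ext y
  rw [mul_assoc, Complex.mul_conj, Complex.normSq_eq_norm_sq]; push_cast; rfl

theorem H1_le (g h : ℝ → ℂ) : (nL2 g ^ 2 + nL2 h ^ 2) ^ ((1:ℝ)/2) ≤ nL2 g + nL2 h := by
  rw [← Real.sqrt_eq_rpow]
  apply Real.sqrt_le_iff.2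
  have := nL2_nonneg g
  have := nL2_nonneg h
  constructor
  · positivity
  · nlinarith [mul_nonneg (nL2_nonneg g) (nL2_nonneg h)]

/-- Real part of the energy identity. -/
theorem energy {ν k lam e M : ℝ} {w F : ℝ → ℂ} (hw : ContDiff ℝ 2 w)
    (h1 : w (-1) = 0) (h2 : w 1 = 0) (hM : Dominates F M)
    (hF : F = fun y : ℝ => -(ν : ℂ) * (deriv (deriv w) y - (k:ℂ)^2 * w y)
            + Complex.I * (k:ℂ) * ((y:ℂ) - (lam:ℂ)) * w y - (e : ℂ) * w y) :
    ν * nL2 (deriv w) ^ 2 + ν * k ^ 2 * nL2 w ^ 2 - e * nL2 w ^ 2 ≤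
      M * Real.sqrt (nL2 w ^ 2 + nL2 (deriv w) ^ 2) := by
  have hw1 : ContDiff ℝ 1 w := hw.of_le (by norm_num)
  have h := hM w hw1 h1 h2
  rw [← Real.sqrt_eq_rpow] at h
  refine le_trans ?_ h
  refine le_trans ?_ (Complex.re_le_norm _)
  rw [weak hw hw1 h1 h2 hF, innI_self, innI_self, innI_real]
  apply le_of_eq
  simp [-Complex.ofReal_pow, -Complex.ofReal_mul, Complex.mul_re, Complex.mul_im]

theorem rho_facts {δ lam : ℝ} (hδ : 0 < δ) : ∃ ρ ρ' W : ℝ → ℝ,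
    (∀ y, HasDerivAt ρ (ρ' y) y) ∧ Continuous ρ' ∧ Continuous W ∧
    (∀ y, |ρ y| ≤ 1) ∧ (∀ y, |ρ' y| ≤ δ⁻¹) ∧ (∀ y, δ + |y - lam| ≤ 2 * W y) ∧
    (∀ y, W y ≤ 2 * ((y - lam) * ρ y) + 2 * δ ^ 2 * ρ' y) ∧ (∀ y, δ ≤ W y) := by
  have hpos : ∀ y, 0 < δ ^ 2 + (y - lam) ^ 2 := fun y => by positivity
  have hW : ∀ y, 0 < Real.sqrt (δ ^ 2 + (y - lam) ^ 2) := fun y => Real.sqrt_pos.2 (hpos y)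
  have hsq : ∀ y, Real.sqrt (δ ^ 2 + (y - lam) ^ 2) ^ 2 = δ ^ 2 + (y - lam) ^ 2 :=
    fun y => Real.sq_sqrt (hpos y).le
  have hδW : ∀ y, δ ≤ Real.sqrt (δ ^ 2 + (y - lam) ^ 2) := fun y =>
    Real.le_sqrt_of_sq_le (by nlinarith [sq_nonneg (y - lam)])
  have hxW : ∀ y, |y - lam| ≤ Real.sqrt (δ ^ 2 + (y - lam) ^ 2) := fun y =>
    Real.le_sqrt_of_sq_le (by rw [sq_abs]; nlinarith [sq_nonneg δ])
  have hcW : Continuous fun y => Real.sqrt (δ ^ 2 + (y - lam) ^ 2) := by fun_prop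
  refine ⟨fun y => (y - lam) / Real.sqrt (δ ^ 2 + (y - lam) ^ 2),
    fun y => δ ^ 2 / Real.sqrt (δ ^ 2 + (y - lam) ^ 2) ^ 3,
    fun y => Real.sqrt (δ ^ 2 + (y - lam) ^ 2), ?_, ?_, hcW, ?_, ?_, ?_, ?_, hδW⟩
  · intro y
    have d1 : HasDerivAt (fun y => y - lam) 1 y := (hasDerivAt_id y).sub_const lam
    have d2 := ((d1.pow 2).const_add (δ ^ 2)).sqrt (hpos y).ne'
    have d3 : HasDerivAt (fun y => (y - lam) / Real.sqrt (δ ^ 2 + (y - lam) ^ 2)) _ y :=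
      d1.div d2 (hW y).ne'
    refine d3.congr_deriv ?_
    have h := (hW y).ne'
    have h3 := hsq y
    try simp only [Pi.pow_apply]
    set s := Real.sqrt (δ ^ 2 + (y - lam) ^ 2)
    field_simp
    push_cast
    linear_combination 2 * h3
  · exact continuous_const.div (hcW.pow 3) (fun y => pow_ne_zero _ (hW y).ne')
  · intro y
    rw [abs_div, abs_of_pos (hW y)]
    exact (div_le_one (hW y)).2 (hxW y)
  · intro y
    have := hW y
    rw [abs_of_nonneg (by positivity), inv_eq_one_div, div_le_div_iff₀ (by positivity) hδ]
    nlinarith [pow_le_pow_left₀ hδ.le (hδW y) 3]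
  · intro y
    linarith [hδW y, hxW y]
  · intro y
    have h := hW y
    have h3 := hsq y
    simp only
    set s := Real.sqrt (δ ^ 2 + (y - lam) ^ 2)
    have e : 2 * ((y - lam) * ((y - lam) / s)) + 2 * δ ^ 2 * (δ ^ 2 / s ^ 3)
      = (2 * (y - lam) ^ 2 * s ^ 2 + 2 * δ ^ 4) / s ^ 3 := by field_simp
    rw [e, le_div_iff₀ (by positivity)]
    have : s * s ^ 3 = (s ^ 2) ^ 2 := by ring
    rw [this, h3]
    nlinarith [sq_nonneg ((y - lam) ^ 2), sq_nonneg (δ ^ 2)]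

theorem contDiff_one_ofC {f f' : ℝ → ℂ} (h : ∀ x, HasDerivAt f (f' x) x) (hc : Continuous f') :
    ContDiff ℝ 1 f ∧ deriv f = f' := by
  have e : deriv f = f' := funext fun x => (h x).deriv
  refine ⟨?_, e⟩
  rw [contDiff_one_iff_deriv]
  refine ⟨fun x => (h x).differentiableAt, ?_⟩
  rwa [e]

/-- Imaginary part of the energy identity with a monotone multiplier. -/
theorem energy2 {ν k lam e M δ : ℝ} {w F : ℝ → ℂ} (hw : ContDiff ℝ 2 w)
    (h1 : w (-1) = 0) (h2 : w 1 = 0) (hM0 : 0 ≤ M) (hM : Dominates F M) (hδ : 0 < δ) (hν : 0 < ν)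
    (hF : F = fun y : ℝ => -(ν : ℂ) * (deriv (deriv w) y - (k:ℂ)^2 * w y)
            + Complex.I * (k:ℂ) * ((y:ℂ) - (lam:ℂ)) * w y - (e : ℂ) * w y) :
    ∃ W : ℝ → ℝ, Continuous W ∧ (∀ y, δ ≤ W y) ∧ (∀ y, δ + |y - lam| ≤ 2 * W y) ∧
      |k| * (∫ y in (-1:ℝ)..1, W y * ‖w y‖ ^ 2) ≤
        2 * (M * (nL2 w + (nL2 (deriv w) + δ⁻¹ * nL2 w)) + ν * δ⁻¹ * (nL2 w * nL2 (deriv w)))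
        + 4 * |k| * δ ^ 2 * (nL2 w * nL2 (deriv w)) := by
  obtain ⟨ρ, ρ', W, hρ, cρ', cW, bρ, bρ', hW1, hW2, hW3⟩ := rho_facts (lam := lam) hδ
  refine ⟨W, cW, hW3, hW1, ?_⟩
  have hw1 : ContDiff ℝ 1 w := hw.of_le (by norm_num)
  have cw := hw.continuous
  have cw' := hw1.continuous_deriv le_rfl
  have cρ : Continuous ρ := continuous_iff_continuousAt.2 fun y => (hρ y).continuousAt
  have dR : ∀ y, HasDerivAt (fun y => (ρ y : ℂ) * w y)
      ((ρ' y : ℂ) * w y + (ρ y : ℂ) * deriv w y) y := fun y =>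
    (hρ y).ofReal_comp.mul (hw1.differentiable one_ne_zero y).hasDerivAt
  obtain ⟨cR, eR⟩ := contDiff_one_ofC dR (by fun_prop)
  have cρw : Continuous fun y => (ρ y : ℂ) * w y := by fun_prop
  have cρ'w : Continuous fun y => (ρ' y : ℂ) * w y := by fun_prop
  have cρw' : Continuous fun y => (ρ y : ℂ) * deriv w y := by fun_prop
  have R1 : (fun y => (ρ y : ℂ) * w y) (-1) = 0 := by simp [h1]
  have R2 : (fun y => (ρ y : ℂ) * w y) 1 = 0 := by simp [h2]
  -- norms
  have n1 : nL2 (fun y => (ρ y : ℂ) * w y) ≤ nL2 w := by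
    apply nL2_mono cρw cw
    intro y _
    rw [norm_mul, Complex.norm_real, Real.norm_eq_abs]
    exact mul_le_of_le_one_left (norm_nonneg _) (bρ y)
  have n2 : nL2 (fun y => (ρ y : ℂ) * deriv w y) ≤ nL2 (deriv w) := by
    apply nL2_mono cρw' cw'
    intro y _
    rw [norm_mul, Complex.norm_real, Real.norm_eq_abs]
    exact mul_le_of_le_one_left (norm_nonneg _) (bρ y)
  have n3 : nL2 (fun y => (ρ' y : ℂ) * w y) ≤ δ⁻¹ * nL2 w := by
    have : nL2 (fun y => ((δ⁻¹ : ℝ) : ℂ) * w y) = δ⁻¹ * nL2 w := by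
      rw [nL2_smul, Complex.norm_real, Real.norm_of_nonneg (by positivity)]
    rw [← this]
    apply nL2_mono cρ'w (by fun_prop)
    intro y _
    rw [norm_mul, norm_mul, Complex.norm_real, Complex.norm_real, Real.norm_eq_abs,
      Real.norm_of_nonneg (show 0 ≤ δ⁻¹ by positivity)]
    exact mul_le_mul_of_nonneg_right (bρ' y) (norm_nonneg _)
  have a0 := nL2_nonneg w
  have b0 := nL2_nonneg (deriv w)
  have hH : ‖innI F (fun y => (ρ y : ℂ) * w y)‖ ≤
      M * (nL2 w + (nL2 (deriv w) + δ⁻¹ * nL2 w)) := by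
    refine (hM _ cR R1 R2).trans (mul_le_mul_of_nonneg_left ((H1_le _ _).trans ?_) hM0)
    rw [eR]
    have := nL2_add cρ'w cρw'
    linarith
  -- splitting of pairings with the derivative
  have split : ∀ u : ℝ → ℂ, Continuous u → innI u (deriv (fun y => (ρ y : ℂ) * w y)) =
      innI u (fun y => (ρ' y : ℂ) * w y) + innI u (fun y => (ρ y : ℂ) * deriv w y) := by
    intro u hu
    rw [eR]
    simp only [innI_eq]
    rw [← intervalIntegral.integral_add (Continuous.intervalIntegrable (by fun_prop) _ _)
      (Continuous.intervalIntegrable (by fun_prop) _ _)]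
    congr 1; ext y
    simp only [map_add]; ring
  have swap : ∀ (θ : ℝ → ℝ) (u v : ℝ → ℂ), innI u (fun y => (θ y : ℂ) * v y) =
      innI (fun y => (θ y : ℂ) * u y) v := by
    intro θ u v
    simp only [innI_eq]
    congr 1; ext y
    simp only [map_mul, Complex.conj_ofReal]; ring
  -- (1)
  have I1 : (∫ y in (-1:ℝ)..1, ρ' y * ‖w y‖ ^ 2) ≤ 2 * (nL2 w * nL2 (deriv w)) := by
    have h := ibp hw1 cR R1 R2
    rw [split w cw, swap ρ' w w, innI_real] at h
    have h' : ((∫ y in (-1:ℝ)..1, ρ' y * ‖w y‖ ^ 2 : ℝ) : ℂ) =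
      -(innI (deriv w) (fun y => (ρ y : ℂ) * w y) + innI w (fun y => (ρ y : ℂ) * deriv w y)) := by
      rw [h]; ring
    have h3 := congrArg norm h'
    rw [norm_neg, Complex.norm_real] at h3
    have h4 := norm_add_le (innI (deriv w) (fun y => (ρ y : ℂ) * w y))
      (innI w (fun y => (ρ y : ℂ) * deriv w y))
    have h5 := cs_innI cw' cρw
    have h6 := cs_innI cw cρw'
    have h7 := le_abs_self (∫ y in (-1:ℝ)..1, ρ' y * ‖w y‖ ^ 2)
    rw [← Real.norm_eq_abs] at h7
    nlinarith [mul_le_mul_of_nonneg_left n1 b0, mul_le_mul_of_nonneg_left n2 a0]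
  -- (2)
  have I2 : |k| * |∫ y in (-1:ℝ)..1, ((y - lam) * ρ y) * ‖w y‖ ^ 2| ≤
      M * (nL2 w + (nL2 (deriv w) + δ⁻¹ * nL2 w)) + ν * δ⁻¹ * (nL2 w * nL2 (deriv w)) := by
    have h := weak hw cR R1 R2 hF
    rw [split _ cw', swap ρ (deriv w) (deriv w), innI_real, swap ρ w w, innI_real,
      swap ρ (fun y => ((y - lam : ℝ) : ℂ) * w y) w] at h
    have e1 : (fun y => (ρ y : ℂ) * (((y - lam : ℝ) : ℂ) * w y)) =
      fun y => (((y - lam) * ρ y : ℝ) : ℂ) * w y := by ext y; push_cast; ring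
    rw [e1, innI_real (fun y => (y - lam) * ρ y)] at h
    have him := congrArg Complex.im h
    simp [-Complex.ofReal_pow, -Complex.ofReal_mul, Complex.mul_re, Complex.mul_im] at him
    have hk : k * (∫ y in (-1:ℝ)..1, ((y - lam) * ρ y) * ‖w y‖ ^ 2) =
      (innI F (fun y => (ρ y : ℂ) * w y)).im
      - ν * (innI (deriv w) (fun y => (ρ' y : ℂ) * w y)).im := by rw [him]; ring
    rw [← abs_mul, hk]
    refine (abs_sub _ _).trans ?_
    have h5 := Complex.abs_im_le_norm (innI F (fun y => (ρ y : ℂ) * w y))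
    have h6 := Complex.abs_im_le_norm (innI (deriv w) (fun y => (ρ' y : ℂ) * w y))
    have h7 := cs_innI cw' cρ'w
    rw [abs_mul, abs_of_pos hν]
    have h8 : |(innI (deriv w) (fun y => (ρ' y : ℂ) * w y)).im| ≤
      δ⁻¹ * (nL2 w * nL2 (deriv w)) := by
      nlinarith [mul_le_mul_of_nonneg_left n3 b0]
    nlinarith [mul_le_mul_of_nonneg_left h8 hν.le]
  have I3 : (∫ y in (-1:ℝ)..1, W y * ‖w y‖ ^ 2) ≤
      2 * (∫ y in (-1:ℝ)..1, ((y - lam) * ρ y) * ‖w y‖ ^ 2) +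
      2 * δ ^ 2 * ∫ y in (-1:ℝ)..1, ρ' y * ‖w y‖ ^ 2 := by
    rw [← intervalIntegral.integral_const_mul, ← intervalIntegral.integral_const_mul,
      ← intervalIntegral.integral_add (Continuous.intervalIntegrable (by fun_prop) _ _)
      (Continuous.intervalIntegrable (by fun_prop) _ _)]
    apply intervalIntegral.integral_mono_on (by norm_num)
      (Continuous.intervalIntegrable (by fun_prop) _ _)
      (Continuous.intervalIntegrable (by fun_prop) _ _)
    intro y _
    nlinarith [mul_le_mul_of_nonneg_right (hW2 y) (sq_nonneg ‖w y‖)]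
  have k0 := abs_nonneg k
  have I4 := mul_le_mul_of_nonneg_left I3 k0
  have I5 := mul_le_mul_of_nonneg_left I1 (show 0 ≤ 2 * |k| * δ ^ 2 by positivity)
  have I6 := mul_le_mul_of_nonneg_left
    (le_abs_self (∫ y in (-1:ℝ)..1, ((y - lam) * ρ y) * ‖w y‖ ^ 2)) k0
  linarith


set_option maxHeartbeats 1000000 in
theorem apriori {k lam ε M δ : ℝ} {w F : ℝ → ℂ} (hw : ContDiff ℝ 2 w)
    (h1 : w (-1) = 0) (h2 : w 1 = 0) (hM0 : 0 ≤ M) (hM : Dominates F M) (hδ : 0 < δ)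
    (hδ1 : δ ≤ 1) (hk : 1 ≤ |k|) (hε : ε ≤ 1 / 144)
    (hF : F = fun y : ℝ => -((|k| * δ ^ 3 : ℝ) : ℂ) * (deriv (deriv w) y - (k:ℂ)^2 * w y)
            + Complex.I * (k:ℂ) * ((y:ℂ) - (lam:ℂ)) * w y - ((ε * (|k| * δ) : ℝ) : ℂ) * w y) :
    |k| * nL2 w * δ ^ 2 ≤ 21 * M ∧ |k| * nL2 (deriv w) * δ ^ 3 ≤ 3 * M ∧
    ∃ W : ℝ → ℝ, Continuous W ∧ (∀ y, δ ≤ W y) ∧ (∀ y, δ + |y - lam| ≤ 2 * W y) ∧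
      |k| ^ 2 * (∫ y in (-1:ℝ)..1, W y * ‖w y‖ ^ 2) * δ ^ 3 ≤ 529 * M ^ 2 := by
  have hK : 0 < |k| := by linarith
  have hE := energy hw h1 h2 hM hF
  obtain ⟨W, cW, W1, W2, hE2⟩ := energy2 hw h1 h2 hM0 hM hδ (by positivity) hF
  have cw := hw.continuous
  have hE3 : δ * nL2 w ^ 2 ≤ ∫ y in (-1:ℝ)..1, W y * ‖w y‖ ^ 2 := by
    rw [nL2_sq, ← intervalIntegral.integral_const_mul]
    apply intervalIntegral.integral_mono_on (by norm_num)
      (Continuous.intervalIntegrable (by fun_prop) _ _)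
      (Continuous.intervalIntegrable (by fun_prop) _ _)
    intro y _
    exact mul_le_mul_of_nonneg_right (W1 y) (sq_nonneg _)
  have a0 := nL2_nonneg w
  have b0 := nL2_nonneg (deriv w)
  have k2 : k ^ 2 = |k| ^ 2 := (sq_abs k).symm
  rw [k2] at hE
  suffices H : |k| * nL2 w * δ ^ 2 ≤ 21 * M ∧ |k| * nL2 (deriv w) * δ ^ 3 ≤ 3 * M ∧
      |k| ^ 2 * (∫ y in (-1:ℝ)..1, W y * ‖w y‖ ^ 2) * δ ^ 3 ≤ 529 * M ^ 2 from
    ⟨H.1, H.2.1, W, cW, W1, W2, H.2.2⟩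
  generalize (∫ y in (-1:ℝ)..1, W y * ‖w y‖ ^ 2) = E at *
  generalize nL2 w = a at *
  generalize nL2 (deriv w) = b at *
  generalize |k| = K at *
  obtain ⟨A, hA⟩ : ∃ A, A = K * a * δ ^ 2 := ⟨_, rfl⟩
  obtain ⟨B, hB⟩ : ∃ B, B = K * b * δ ^ 3 := ⟨_, rfl⟩
  obtain ⟨N, hN⟩ : ∃ N, N = K * δ ^ 3 * Real.sqrt (a ^ 2 + b ^ 2) := ⟨_, rfl⟩
  have A0 : 0 ≤ A := by rw [hA]; positivity
  have B0 : 0 ≤ B := by rw [hB]; positivity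
  have N0 : 0 ≤ N := by rw [hN]; positivity
  have hNsq : N ^ 2 = K ^ 2 * δ ^ 6 * a ^ 2 + B ^ 2 := by
    rw [hN, mul_pow, Real.sq_sqrt (by positivity), hB]; ring
  have e1 : N ^ 2 ≤ M * N + A ^ 2 / 144 := by
    have h := mul_le_mul_of_nonneg_left hE (show 0 ≤ K * δ ^ 3 by positivity)
    have h' : B ^ 2 + K ^ 2 * δ ^ 6 * a ^ 2 * K ^ 2 - ε * A ^ 2 ≤ M * N := by
      rw [hB, hA, hN]; linarith
    have h3 : K ^ 2 * δ ^ 6 * a ^ 2 ≤ K ^ 2 * δ ^ 6 * a ^ 2 * K ^ 2 :=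
      le_mul_of_one_le_right (by positivity) (by nlinarith)
    have h4 : ε * A ^ 2 ≤ 1 / 144 * A ^ 2 := mul_le_mul_of_nonneg_right hε (sq_nonneg _)
    linarith
  have e2 : N ≤ M + A / 12 := by
    by_contra hh
    push Not at hh
    nlinarith
  have e3 : B ≤ N := by
    apply le_of_sq_le_sq _ N0
    rw [hNsq]
    have : 0 ≤ K ^ 2 * δ ^ 6 * a ^ 2 := by positivity
    linarith
  have e4 : K ^ 2 * E * δ ^ 3 ≤ 2 * M * B + 4 * M * A + 6 * A * B := by
    have h := mul_le_mul_of_nonneg_left hE2 (show 0 ≤ K * δ ^ 3 by positivity)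
    have r : K * δ ^ 3 * (2 * (M * (a + (b + δ⁻¹ * a)) + K * δ ^ 3 * δ⁻¹ * (a * b)) +
        4 * K * δ ^ 2 * (a * b)) = 2 * M * (A * δ + B + A) + 6 * A * B := by
      rw [hA, hB]; field_simp; ring
    rw [r] at h
    nlinarith [mul_nonneg hM0 (mul_nonneg A0 (sub_nonneg.2 hδ1))]
  have e5 : A ^ 2 ≤ K ^ 2 * E * δ ^ 3 := by
    have := mul_le_mul_of_nonneg_left hE3 (show 0 ≤ K ^ 2 * δ ^ 3 by positivity)
    rw [hA]; linarith
  have e6 : B ≤ M + A / 12 := e3.trans e2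
  have e7 : A ^ 2 ≤ 2 * M * (M + A / 12) + 4 * M * A + 6 * A * (M + A / 12) := by
    nlinarith [mul_le_mul_of_nonneg_left e6 hM0, mul_le_mul_of_nonneg_left e6 A0]
  have e8 : A ≤ 21 * M := by
    by_contra hh
    push Not at hh
    nlinarith
  have e9 : B ≤ 3 * M := by linarith
  rw [← hA, ← hB]
  refine ⟨e8, e9, e4.trans ?_⟩
  have m1 := mul_le_mul_of_nonneg_left e9 hM0
  have m2 := mul_le_mul_of_nonneg_left e8 hM0
  have m3 := mul_le_mul e8 e9 B0 (by positivity)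
  have m4 := mul_nonneg hM0 hM0
  linarith


theorem chi_facts {δ lam : ℝ} (hδ : 0 < δ) {χ : ℝ → ℝ}
    (hχ : χ = fun y : ℝ => if δ ≤ |y - lam| then (y - lam)⁻¹
            else 2 * (y - lam) / δ^2 - (y - lam)^3 / δ^4) :
    ContDiff ℝ 1 χ ∧ (∀ y, |1 - (y - lam) * χ y| ≤ 1) ∧
    (∀ y, δ ≤ |y - lam| → 1 - (y - lam) * χ y = 0) ∧
    (∀ y, |χ y| ≤ 4 / (|y - lam| + δ)) := by
  refine ⟨?_, ?_, ?_, ?_⟩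
  · obtain ⟨g1, g2⟩ := glue (a := 1) (p := fun u => 2 - u) (p' := fun _ => -1)
      (q := fun u => u⁻¹) (q' := fun u => -(u ^ 2)⁻¹)
      (fun x _ => by simpa using (hasDerivAt_id x).const_sub 2)
      (fun x hx => hasDerivAt_inv (by linarith)) (by norm_num) (by norm_num)
      continuousOn_const
      (((continuous_id.pow 2).continuousOn.inv₀ (fun x hx => by
        have : (1:ℝ) ≤ x := hx
        change x ^ 2 ≠ 0; positivity)).neg)
    have hg := contDiff_one_of g1 g2
    have e : χ = fun y => ((y - lam) / δ / δ) *
        (fun x => if x ≤ (1:ℝ) then 2 - x else x⁻¹) (((y - lam) / δ) ^ 2) := by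
      rw [hχ]; ext y
      have hiff : ((y - lam) / δ) ^ 2 ≤ 1 ↔ |y - lam| ≤ δ := by
        rw [sq_le_one_iff_abs_le_one, abs_div, abs_of_pos hδ, div_le_one hδ]
      simp only [hiff]
      rcases lt_trichotomy |y - lam| δ with h | h | h
      · rw [if_neg (not_le.2 h), if_pos h.le]; field_simp
      · rw [if_pos h.ge, if_pos h.le]
        have h2 : (y - lam) ^ 2 = δ ^ 2 := by rw [← h, sq_abs]
        have h0 : y - lam ≠ 0 := by
          intro h0; rw [h0] at h; simp at h; linarith
        field_simp
        rw [h2]; ring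
      · rw [if_pos h.le, if_neg (not_le.2 h)]
        have h0 : y - lam ≠ 0 := by
          intro h0; rw [h0] at h; simp at h; linarith
        field_simp
    rw [e]
    apply ContDiff.mul (by fun_prop)
    exact hg.comp (by fun_prop)
  · intro y
    rw [hχ]; simp only
    split_ifs with h
    · have h0 : y - lam ≠ 0 := by
        intro h0; rw [h0] at h; simp at h; linarith
      rw [mul_inv_cancel₀ h0]; simp
    · have e : 1 - (y - lam) * (2 * (y - lam) / δ^2 - (y - lam)^3 / δ^4) =
        (1 - ((y - lam) / δ) ^ 2) ^ 2 := by field_simp; ring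
      have h1 : ((y - lam) / δ) ^ 2 ≤ 1 := by
        rw [sq_le_one_iff_abs_le_one, abs_div, abs_of_pos hδ, div_le_one hδ]
        exact (not_le.1 h).le
      rw [e, abs_of_nonneg (by positivity)]
      nlinarith [sq_nonneg ((y - lam) / δ)]
  · intro y h
    rw [hχ]; simp only
    rw [if_pos h]
    have h0 : y - lam ≠ 0 := by
      intro h0; rw [h0] at h; simp at h; linarith
    rw [mul_inv_cancel₀ h0]; simp
  · intro y
    rw [hχ]; simp only
    split_ifs with h
    · rw [abs_inv, inv_eq_one_div, div_le_div_iff₀ (by linarith) (by positivity)]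
      linarith
    · have h := not_le.1 h
      have e : 2 * (y - lam) / δ^2 - (y - lam)^3 / δ^4 =
        ((y - lam) / δ) * (2 - ((y - lam) / δ) ^ 2) / δ := by field_simp
      have ha : |(y - lam) / δ| ≤ 1 := by
        rw [abs_div, abs_of_pos hδ, div_le_one hδ]; exact h.le
      have h1 : ((y - lam) / δ) ^ 2 ≤ 1 := by rwa [sq_le_one_iff_abs_le_one]
      have h2 : |2 - ((y - lam) / δ) ^ 2| ≤ 2 := by
        rw [abs_le]; constructor <;> nlinarith [sq_nonneg ((y - lam) / δ)]
      rw [e, abs_div, abs_mul, abs_of_pos hδ, div_le_div_iff₀ hδ (by positivity)]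
      have h3 := mul_le_mul ha h2 (abs_nonneg _) zero_le_one
      have h4 := mul_le_mul h3 (show |y - lam| + δ ≤ 2 * δ by linarith) (by positivity)
        (by norm_num)
      linarith

theorem eta_facts {j r : ℝ} (hj : j = 1 ∨ j = -1) (hr : 0 < r) (hr1 : r ≤ 1) :
    ∃ η η' : ℝ → ℝ, (∀ y, HasDerivAt η (η' y) y) ∧ Continuous η' ∧ η j = 1 ∧ η (-j) = 0 ∧
      (∀ y ∈ Icc (-1:ℝ) 1, |η y| ≤ 1) ∧ (∀ y ∈ Icc (-1:ℝ) 1, |η' y| ≤ 2 / r ^ 2) ∧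
      (∀ y ∈ Icc (-1:ℝ) 1, r ^ 2 < |y - j| → η y = 0) ∧
      (∀ y ∈ Icc (-1:ℝ) 1, r ^ 2 < |y - j| → η' y = 0) := by
  obtain ⟨g1, g2⟩ := glue (a := 0) (p := fun _ => 0) (p' := fun _ => 0)
      (q := fun u => u ^ 2) (q' := fun u => 2 * u)
      (fun x _ => hasDerivAt_const x 0)
      (fun x hx => by simpa using hasDerivAt_pow 2 x) (by norm_num) (by norm_num)
      continuousOn_const (by fun_prop)
  have jj : j * j = 1 := by rcases hj with h | h <;> rw [h] <;> norm_num
  have r2 : 0 < r ^ 2 := by positivity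
  have hdist : ∀ y ∈ Icc (-1:ℝ) 1, |y - j| = 1 - j * y := by
    intro y hy
    rcases hj with h | h
    · rw [h, abs_of_nonpos (by linarith [hy.2])]; ring
    · rw [h, abs_of_nonneg (by linarith [hy.1])]; ring
  have hneg : ∀ y ∈ Icc (-1:ℝ) 1, r ^ 2 < |y - j| → 1 - (1 - j * y) / r ^ 2 ≤ 0 := by
    intro y hy h
    rw [hdist y hy] at h
    have := (one_lt_div r2).2 h
    linarith
  have hle : ∀ y ∈ Icc (-1:ℝ) 1, 1 - (1 - j * y) / r ^ 2 ≤ 1 := by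
    intro y hy
    have h := abs_nonneg (y - j)
    rw [hdist y hy] at h
    have := div_nonneg h r2.le
    linarith
  refine ⟨fun y => (fun x => if x ≤ (0:ℝ) then 0 else x ^ 2) (1 - (1 - j * y) / r ^ 2),
    fun y => (fun x => if x ≤ (0:ℝ) then 0 else 2 * x) (1 - (1 - j * y) / r ^ 2) * (j / r ^ 2),
    ?_, ?_, ?_, ?_, ?_, ?_, ?_, ?_⟩
  · intro y
    have d : HasDerivAt (fun y => 1 - (1 - j * y) / r ^ 2) (j / r ^ 2) y := by
      have := ((((hasDerivAt_id y).const_mul j).const_sub 1).div_const (r ^ 2)).const_sub 1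
      refine this.congr_deriv ?_
      simp; ring
    exact (g1 _).comp y d
  · exact (g2.comp (by fun_prop)).mul continuous_const
  · simp [jj]
  · have : 1 - (1 - j * (-j)) / r ^ 2 ≤ 0 := by
      rw [show 1 - j * (-j) = 2 by linarith, sub_nonpos, one_le_div r2]
      nlinarith
    simp only [if_pos this]
  · intro y hy
    simp only
    split_ifs with h
    · simp
    · rw [abs_of_nonneg (by positivity)]
      nlinarith [hle y hy]
  · intro y hy
    simp only
    have aj : |j| = 1 := by rcases hj with h | h <;> rw [h] <;> norm_num
    rw [abs_mul, abs_div, aj, abs_of_pos r2]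
    have : |if 1 - (1 - j * y) / r ^ 2 ≤ 0 then 0 else 2 * (1 - (1 - j * y) / r ^ 2)| ≤ 2 := by
      split_ifs with h
      · simp
      · rw [abs_of_nonneg (by linarith)]
        linarith [hle y hy]
    calc _ ≤ 2 * (1 / r ^ 2) := mul_le_mul_of_nonneg_right this (by positivity)
      _ = _ := by ring
  · intro y hy h
    simp only [if_pos (hneg y hy h)]
  · intro y hy h
    simp only [if_pos (hneg y hy h), zero_mul]


set_option maxHeartbeats 1000000 in
theorem core {k lam ε M p q j S : ℝ} {w F f fχ : ℝ → ℂ} {χ : ℝ → ℝ} (hw : ContDiff ℝ 2 w)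
    (h1 : w (-1) = 0) (h2 : w 1 = 0) (hM0 : 0 ≤ M) (hM : Dominates F M) (hp : 0 < p) (hq : 0 < q)
    (hp1 : p ^ 4 ≤ 1) (hk : 1 ≤ |k|) (hkp : |k| * p ^ 4 ≤ 1) (hε0 : 0 ≤ ε) (hε : ε ≤ 1 / 144)
    (hF : F = fun y : ℝ => -((|k| * (p ^ 4) ^ 3 : ℝ) : ℂ) * (deriv (deriv w) y - (k:ℂ)^2 * w y)
            + Complex.I * (k:ℂ) * ((y:ℂ) - (lam:ℂ)) * w y - ((ε * (|k| * p ^ 4) : ℝ) : ℂ) * w y)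
    (hχ : χ = fun y : ℝ => if p ^ 4 ≤ |y - lam| then (y - lam)⁻¹
            else 2 * (y - lam) / (p ^ 4)^2 - (y - lam)^3 / (p ^ 4)^4)
    (hj : j = 1 ∨ j = -1) (hf : ContDiff ℝ 1 f) (hfj : f (-j) = 0)
    (hfχ : fχ = fun y : ℝ => f y * ((χ y : ℝ) : ℂ)) (hD : |j - lam| + p ^ 4 = q ^ 4)
    (hS0 : 0 ≤ S) (hS : ∀ y ∈ Ioo (-1:ℝ) 1, |y - lam| < p ^ 4 → ‖f y‖ ≤ S) :
    |k| * ‖innI w f‖ ≤ M * (42 * (S / p ^ 6) + 760 * (‖f j‖ / (q ^ 3 * p ^ 3))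
      + 4 * nL2 (deriv fχ) + 43 * (nL2 fχ / p ^ 4)) := by
  have hδ : 0 < p ^ 4 := by positivity
  have hK : 0 < |k| := by linarith
  obtain ⟨hA, hB, W, cW, W1, W2, hE⟩ := apriori hw h1 h2 hM0 hM hδ hp1 hk hε hF
  obtain ⟨cχ, θ1, θ2, χ3⟩ := chi_facts hδ hχ
  have hpq : p ≤ q := by
    by_contra hh
    push Not at hh
    have := pow_lt_pow_left₀ hh hq.le (n := 4) (by norm_num)
    linarith [abs_nonneg (j - lam)]
  obtain ⟨r, hr⟩ : ∃ r, r = p ^ 3 / q := ⟨_, rfl⟩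
  have r0 : 0 < r := by rw [hr]; positivity
  have rp : r ≤ p ^ 2 := by
    rw [hr, div_le_iff₀ hq]
    nlinarith [mul_le_mul_of_nonneg_left hpq (sq_nonneg p)]
  have rδ : r ^ 2 ≤ p ^ 4 := by nlinarith
  have p21 : p ^ 2 ≤ 1 := by nlinarith [sq_nonneg (p ^ 2)]
  obtain ⟨η, η', dη, cη', ηj, ηj', ηb, ηb', ηs, ηs'⟩ := eta_facts hj r0 (rp.trans p21)
  have cη : Continuous η := continuous_iff_continuousAt.2 fun y => (dη y).continuousAt
  have hw1 : ContDiff ℝ 1 w := hw.of_le (by norm_num)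
  have cw := hw.continuous
  have cw' := hw1.continuous_deriv le_rfl
  have cχc := cχ.continuous
  have cfc := hf.continuous
  -- the corrector
  obtain ⟨c, hc⟩ : ∃ c : ℂ, c = f j * (χ j : ℂ) := ⟨_, rfl⟩
  have cb : ‖c‖ ≤ 4 * ‖f j‖ / q ^ 4 := by
    have h := χ3 j
    rw [hD] at h
    rw [hc, norm_mul, Complex.norm_real, Real.norm_eq_abs]
    calc _ ≤ ‖f j‖ * (4 / q ^ 4) := mul_le_mul_of_nonneg_left h (norm_nonneg _)
      _ = _ := by ring
  have cη0 : Continuous fun y => (η y : ℂ) := by fun_prop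
  have cη1 : Continuous fun y => (η' y : ℂ) := by fun_prop
  have cφ : ContDiff ℝ 1 fχ := by
    rw [hfχ]
    exact hf.mul (Complex.ofRealCLM.contDiff.comp cχ)
  have cφ' := cφ.continuous_deriv le_rfl
  have cφc := cφ.continuous
  have dg : ∀ y, HasDerivAt (fun y => fχ y + (-c) * (η y : ℂ))
      (deriv fχ y + (-c) * (η' y : ℂ)) y := fun y =>
    (cφ.differentiable one_ne_zero y).hasDerivAt.add ((dη y).ofReal_comp.const_mul (-c))
  obtain ⟨cg, eg⟩ := contDiff_one_ofC dg (by fun_prop)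
  obtain ⟨g, hg⟩ : ∃ g : ℝ → ℂ, g = fun y => fχ y + (-c) * (η y : ℂ) := ⟨_, rfl⟩
  rw [← hg] at cg eg
  have cgc := cg.continuous
  have cg' := cg.continuous_deriv le_rfl
  have gj : g j = 0 := by rw [hg, hfχ]; simp [ηj, hc]
  have gj' : g (-j) = 0 := by rw [hg, hfχ]; simp [ηj', hfj]
  have g12 : g (-1) = 0 ∧ g 1 = 0 := by
    rcases hj with h | h
    · rw [h] at gj gj'; exact ⟨gj', gj⟩
    · rw [h] at gj gj'; rw [neg_neg] at gj'; exact ⟨gj, gj'⟩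
  have nη : nL2 (fun y => (η y : ℂ)) ≤ 2 * r := by
    apply le_of_sq_le_sq _ (by positivity)
    have := nL2_supp (g := fun y => (η y : ℂ)) (c := j) (r := r ^ 2) (B := 1) (by positivity)
      (fun y hy => by rw [Complex.norm_real]; exact ηb y hy)
      (fun y hy h => by rw [ηs y hy h]; simp)
    nlinarith [sq_nonneg r]
  have nη' : nL2 (fun y => (η' y : ℂ)) ≤ 3 / r := by
    apply le_of_sq_le_sq _ (by positivity)
    have := nL2_supp (g := fun y => (η' y : ℂ)) (c := j) (r := r ^ 2) (B := 2 / r ^ 2)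
      (by positivity)
      (fun y hy => by rw [Complex.norm_real]; exact ηb' y hy)
      (fun y hy h => by rw [ηs' y hy h]; simp)
    refine this.trans ?_
    rw [show (2 / r ^ 2) ^ 2 * (2 * r ^ 2) = 8 / r ^ 2 by field_simp; norm_num,
      show (3 / r) ^ 2 = 9 / r ^ 2 by field_simp; norm_num]
    gcongr; norm_num
  have ng : nL2 g ≤ nL2 fχ + ‖c‖ * (2 * r) := by
    have h := nL2_add cφc (g := fun y => (-c) * (η y : ℂ)) (by fun_prop)
    rw [← hg, nL2_smul, norm_neg] at h
    have := mul_le_mul_of_nonneg_left nη (norm_nonneg c)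
    linarith
  have ng' : nL2 (deriv g) ≤ nL2 (deriv fχ) + ‖c‖ * (3 / r) := by
    have h := nL2_add cφ' (g := fun y => (-c) * (η' y : ℂ)) (by fun_prop)
    rw [← eg, nL2_smul, norm_neg] at h
    have := mul_le_mul_of_nonneg_left nη' (norm_nonneg c)
    linarith
  have a0 := nL2_nonneg w
  have b0 := nL2_nonneg (deriv w)
  have g0 := nL2_nonneg g
  have g0' := nL2_nonneg (deriv g)
  -- part 2: the good test function
  have P2 : |k| * ‖innI (fun y => ((y - lam : ℝ) : ℂ) * w y) g‖ ≤
      M * (4 * nL2 (deriv g) + 43 * (nL2 g / p ^ 4)) := by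
    have h := weak hw cg g12.1 g12.2 hF
    have h' : Complex.I * k * innI (fun y => ((y - lam : ℝ) : ℂ) * w y) g =
        innI F g - ((|k| * (p ^ 4) ^ 3 : ℝ) : ℂ) * innI (deriv w) (deriv g)
        + ((ε * (|k| * p ^ 4) - |k| * (p ^ 4) ^ 3 * k ^ 2 : ℝ) : ℂ) * innI w g := by
      rw [h]; push_cast; ring
    have h3 := congrArg norm h'
    rw [norm_mul, norm_mul, Complex.norm_I, one_mul, Complex.norm_real, Real.norm_eq_abs] at h3
    rw [h3]
    refine (norm_add_le _ _).trans ?_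
    have t0 := norm_sub_le (innI F g) (((|k| * (p ^ 4) ^ 3 : ℝ) : ℂ) * innI (deriv w) (deriv g))
    have t1 : ‖innI F g‖ ≤ M * (nL2 g + nL2 (deriv g)) :=
      (hM g cg g12.1 g12.2).trans (mul_le_mul_of_nonneg_left (H1_le _ _) hM0)
    have t2 : ‖((|k| * (p ^ 4) ^ 3 : ℝ) : ℂ) * innI (deriv w) (deriv g)‖ ≤
        3 * M * nL2 (deriv g) := by
      rw [norm_mul, Complex.norm_real, Real.norm_of_nonneg (by positivity)]
      have := cs_innI cw' cg'
      calc _ ≤ |k| * (p ^ 4) ^ 3 * (nL2 (deriv w) * nL2 (deriv g)) :=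
            mul_le_mul_of_nonneg_left this (by positivity)
        _ = (|k| * nL2 (deriv w) * (p ^ 4) ^ 3) * nL2 (deriv g) := by ring
        _ ≤ _ := mul_le_mul_of_nonneg_right hB g0'
    have kk : |k| * (p ^ 4) ^ 3 * k ^ 2 ≤ |k| * p ^ 4 := by
      rw [← sq_abs k]
      have e : |k| * (p ^ 4) ^ 3 * |k| ^ 2 = (|k| * p ^ 4) * (|k| * p ^ 4) ^ 2 := by ring
      rw [e]
      apply mul_le_of_le_one_right (by positivity)
      exact pow_le_one₀ (by positivity) hkp
    have t3 : ‖((ε * (|k| * p ^ 4) - |k| * (p ^ 4) ^ 3 * k ^ 2 : ℝ) : ℂ) * innI w g‖ ≤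
        42 * M * (nL2 g / p ^ 4) := by
      rw [norm_mul, Complex.norm_real, Real.norm_eq_abs]
      have u1 : |ε * (|k| * p ^ 4) - |k| * (p ^ 4) ^ 3 * k ^ 2| ≤ |k| * p ^ 4 := by
        have v1 : 0 ≤ |k| * p ^ 4 := by positivity
        have v2 : 0 ≤ |k| * (p ^ 4) ^ 3 * k ^ 2 := by positivity
        have v3 : ε * (|k| * p ^ 4) ≤ 1 * (|k| * p ^ 4) :=
          mul_le_mul_of_nonneg_right (by linarith) v1
        have v4 : 0 ≤ ε * (|k| * p ^ 4) := mul_nonneg hε0 v1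
        rw [abs_le]; constructor <;> linarith
      have := cs_innI cw cgc
      calc _ ≤ (|k| * p ^ 4) * (nL2 w * nL2 g) := mul_le_mul u1 this (norm_nonneg _) (by positivity)
        _ = (|k| * nL2 w * (p ^ 4) ^ 2) * (nL2 g / p ^ 4) := by field_simp
        _ ≤ (21 * M) * (nL2 g / p ^ 4) := mul_le_mul_of_nonneg_right hA (by positivity)
        _ ≤ _ := by
          have : 0 ≤ M * (nL2 g / p ^ 4) := by positivity
          linarith
    have t4 : M * nL2 g ≤ M * (nL2 g / p ^ 4) := by
      apply mul_le_mul_of_nonneg_left _ hM0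
      rw [le_div_iff₀ hδ]
      exact mul_le_of_le_one_right g0 hp1
    linarith
  -- part 1: near the critical layer
  have P1 : |k| * ‖innI w (fun y => ((1 - (y - lam) * χ y : ℝ) : ℂ) * f y)‖ ≤
      M * (42 * (S / p ^ 6)) := by
    have cθ : Continuous fun y => ((1 - (y - lam) * χ y : ℝ) : ℂ) := by fun_prop
    have nθ : nL2 (fun y => ((1 - (y - lam) * χ y : ℝ) : ℂ)) ≤ 2 * p ^ 2 := by
      apply le_of_sq_le_sq _ (by positivity)
      have := nL2_supp (g := fun y => ((1 - (y - lam) * χ y : ℝ) : ℂ)) (c := lam) (r := p ^ 4)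
        (B := 1) hδ.le
        (fun y hy => by rw [Complex.norm_real]; exact θ1 y)
        (fun y hy h => by rw [θ2 y h.le]; simp)
      nlinarith
    have i1 : ‖innI w (fun y => ((1 - (y - lam) * χ y : ℝ) : ℂ) * f y)‖ ≤
        S * (nL2 w * nL2 (fun y => ((1 - (y - lam) * χ y : ℝ) : ℂ))) := by
      refine le_trans ?_ (mul_le_mul_of_nonneg_left (cs_norm cw cθ) hS0)
      rw [innI_eq, ← intervalIntegral.integral_const_mul]
      refine (intervalIntegral.norm_integral_le_integral_norm (by norm_num)).trans ?_
      apply intervalIntegral.integral_mono_on_of_le_Ioo (by norm_num)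
        (Continuous.intervalIntegrable (by fun_prop) _ _)
        (Continuous.intervalIntegrable (by fun_prop) _ _)
      intro y hy
      rw [norm_mul, RCLike.norm_conj, norm_mul]
      by_cases h : p ^ 4 ≤ |y - lam|
      · rw [θ2 y h]; simp
      · have := mul_le_mul_of_nonneg_left (hS y hy (not_le.1 h))
          (mul_nonneg (norm_nonneg (w y)) (norm_nonneg (((1 - (y - lam) * χ y : ℝ) : ℂ))))
        linarith
    calc _ ≤ |k| * (S * (nL2 w * (2 * p ^ 2))) := by
          apply mul_le_mul_of_nonneg_left (i1.trans _) hK.le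
          apply mul_le_mul_of_nonneg_left _ hS0
          exact mul_le_mul_of_nonneg_left nθ a0
      _ = (|k| * nL2 w * (p ^ 4) ^ 2) * (2 * (S / p ^ 6)) := by field_simp
      _ ≤ (21 * M) * (2 * (S / p ^ 6)) := mul_le_mul_of_nonneg_right hA (by positivity)
      _ = _ := by ring
  -- part 3: the boundary corrector
  have P3 : |k| * ‖innI (fun y => ((y - lam : ℝ) : ℂ) * w y) (fun y => c * (η y : ℂ))‖ ≤
      M * (368 * (‖f j‖ / (q ^ 3 * p ^ 3))) := by
    have cV : Continuous fun y => ((Real.sqrt (W y) : ℝ) : ℂ) * w y := by fun_prop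
    have nV : nL2 (fun y => ((Real.sqrt (W y) : ℝ) : ℂ) * w y) ^ 2 =
        ∫ y in (-1:ℝ)..1, W y * ‖w y‖ ^ 2 := by
      rw [nL2_sq]
      congr 1; ext y
      rw [norm_mul, mul_pow, Complex.norm_real, Real.norm_of_nonneg (Real.sqrt_nonneg _),
        Real.sq_sqrt (hδ.le.trans (W1 y))]
    have nV2 : |k| * nL2 (fun y => ((Real.sqrt (W y) : ℝ) : ℂ) * w y) * p ^ 6 ≤ 23 * M := by
      apply le_of_sq_le_sq _ (by positivity)
      rw [mul_pow, mul_pow, nV]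
      nlinarith
    have i1 : ‖innI (fun y => ((y - lam : ℝ) : ℂ) * w y) (fun y => c * (η y : ℂ))‖ ≤
        2 * q ^ 2 * (nL2 (fun y => ((Real.sqrt (W y) : ℝ) : ℂ) * w y) *
          nL2 (fun y => c * (η y : ℂ))) := by
      refine le_trans ?_ (mul_le_mul_of_nonneg_left
        (cs_norm cV (g := fun y => c * (η y : ℂ)) (by fun_prop)) (by positivity))
      rw [innI_eq, ← intervalIntegral.integral_const_mul]
      refine (intervalIntegral.norm_integral_le_integral_norm (by norm_num)).trans ?_
      apply intervalIntegral.integral_mono_on (by norm_num)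
        (Continuous.intervalIntegrable (by fun_prop) _ _)
        (Continuous.intervalIntegrable (by fun_prop) _ _)
      intro y hy
      rw [norm_mul, RCLike.norm_conj]
      by_cases h : r ^ 2 < |y - j|
      · rw [ηs y hy h]; simp
      · rw [← mul_assoc]
        apply mul_le_mul_of_nonneg_right _ (norm_nonneg _)
        rw [norm_mul, norm_mul, ← mul_assoc]
        apply mul_le_mul_of_nonneg_right _ (norm_nonneg _)
        rw [Complex.norm_real, Complex.norm_real, Real.norm_of_nonneg (Real.sqrt_nonneg _),
          Real.norm_eq_abs]
        push Not at h
        have s1 : |y - lam| ≤ |y - j| + |j - lam| := abs_sub_le y j lam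
        have s2 : |j - lam| ≤ |j - y| + |y - lam| := abs_sub_le j y lam
        rw [abs_sub_comm j y] at s2
        have s3 : |y - lam| ≤ q ^ 4 := by linarith
        have s4 : q ^ 4 ≤ 4 * W y := by linarith [W1 y, W2 y]
        have s5 : q ^ 2 ≤ 2 * Real.sqrt (W y) := by
          apply le_of_sq_le_sq _ (by positivity)
          rw [mul_pow, Real.sq_sqrt (hδ.le.trans (W1 y))]
          nlinarith
        calc _ ≤ q ^ 2 * q ^ 2 := by linarith
          _ ≤ q ^ 2 * (2 * Real.sqrt (W y)) := mul_le_mul_of_nonneg_left s5 (by positivity)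
          _ = _ := by ring
    have V0 := nL2_nonneg (fun y => ((Real.sqrt (W y) : ℝ) : ℂ) * w y)
    rw [nL2_smul] at i1
    generalize nL2 (fun y => ((Real.sqrt (W y) : ℝ) : ℂ) * w y) = V at *
    calc _ ≤ |k| * (2 * q ^ 2 * (V * (4 * ‖f j‖ / q ^ 4 * (2 * r)))) := by
          apply mul_le_mul_of_nonneg_left (i1.trans _) hK.le
          apply mul_le_mul_of_nonneg_left _ (by positivity)
          apply mul_le_mul_of_nonneg_left _ V0
          exact mul_le_mul cb nη (nL2_nonneg _) (by positivity)
      _ = (|k| * V * p ^ 6) * (16 * (‖f j‖ / (q ^ 3 * p ^ 3))) := by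
          rw [hr]; field_simp; ring
      _ ≤ (23 * M) * (16 * (‖f j‖ / (q ^ 3 * p ^ 3))) :=
          mul_le_mul_of_nonneg_right nV2 (by positivity)
      _ = _ := by ring
  -- decomposition
  have dec : innI w f = innI w (fun y => ((1 - (y - lam) * χ y : ℝ) : ℂ) * f y)
      + innI (fun y => ((y - lam : ℝ) : ℂ) * w y) g
      + innI (fun y => ((y - lam : ℝ) : ℂ) * w y) (fun y => c * (η y : ℂ)) := by
    simp only [innI_eq]
    rw [← intervalIntegral.integral_add (Continuous.intervalIntegrable (by fun_prop) _ _)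
      (Continuous.intervalIntegrable (by fun_prop) _ _),
      ← intervalIntegral.integral_add (Continuous.intervalIntegrable (by fun_prop) _ _)
      (Continuous.intervalIntegrable (by fun_prop) _ _)]
    congr 1; ext y
    rw [hg, hfχ]
    simp only [map_mul, map_add, map_neg, Complex.conj_ofReal]
    push_cast; ring
  have tri : ‖innI w f‖ ≤ ‖innI w (fun y => ((1 - (y - lam) * χ y : ℝ) : ℂ) * f y)‖
      + ‖innI (fun y => ((y - lam : ℝ) : ℂ) * w y) g‖
      + ‖innI (fun y => ((y - lam : ℝ) : ℂ) * w y) (fun y => c * (η y : ℂ))‖ := by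
    rw [dec]; exact norm_add₃_le
  have tri2 := mul_le_mul_of_nonneg_left tri hK.le
  have z1 : ‖c‖ * (3 / r) ≤ 12 * (‖f j‖ / (q ^ 3 * p ^ 3)) := by
    calc _ ≤ 4 * ‖f j‖ / q ^ 4 * (3 / r) := mul_le_mul_of_nonneg_right cb (by positivity)
      _ = _ := by rw [hr]; field_simp; ring
  have z2 : ‖c‖ * (2 * r) / p ^ 4 ≤ 8 * (‖f j‖ / (q ^ 3 * p ^ 3)) := by
    calc _ ≤ 4 * ‖f j‖ / q ^ 4 * (2 * r) / p ^ 4 := by gcongr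
      _ = 8 * (‖f j‖ / (q ^ 3 * (q ^ 2 * p))) := by rw [hr]; field_simp; ring
      _ ≤ _ := by
        gcongr
        nlinarith [mul_le_mul hpq hpq hp.le hq.le]
  have z3 : nL2 g / p ^ 4 ≤ nL2 fχ / p ^ 4 + 8 * (‖f j‖ / (q ^ 3 * p ^ 3)) := by
    have : nL2 g / p ^ 4 ≤ (nL2 fχ + ‖c‖ * (2 * r)) / p ^ 4 := by gcongr
    rw [add_div] at this
    linarith
  have z4 : M * (4 * nL2 (deriv g) + 43 * (nL2 g / p ^ 4)) ≤
      M * (4 * nL2 (deriv fχ) + 43 * (nL2 fχ / p ^ 4) + 392 * (‖f j‖ / (q ^ 3 * p ^ 3))) := by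
    apply mul_le_mul_of_nonneg_left _ hM0
    linarith
  linarith

/-- Weak type resolvent estimate with Navier-slip boundary condition. -/
theorem statement4 :
    ∃ ε₀ C : ℝ, 0 < ε₀ ∧ ε₀ < 1 ∧ 0 < C ∧
      ∀ (ν : ℝ) (k : ℤ) (ε lam δ : ℝ) (w F f fχ : ℝ → ℂ) (χ : ℝ → ℝ) (j : ℝ) (M : ℝ),
        0 < ν → ν ≤ 1 → 1 ≤ |k| → ν * (k:ℝ)^2 ≤ 1 → 0 < ε → ε ≤ ε₀ →
        δ = ν ^ ((1:ℝ)/3) * |(k:ℝ)| ^ (-(1:ℝ)/3) →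
        ContDiff ℝ 2 w → w (-1) = 0 → w 1 = 0 →
        (F = fun y : ℝ => -(ν : ℂ) * (deriv (deriv w) y - (k:ℂ)^2 * w y)
            + Complex.I * (k:ℂ) * ((y:ℂ) - (lam:ℂ)) * w y
            - ((ε * ν ^ ((1:ℝ)/3) * |(k:ℝ)| ^ ((2:ℝ)/3) : ℝ) : ℂ) * w y) →
        0 ≤ M → Dominates F M →
        (χ = fun y : ℝ => if δ ≤ |y - lam| then (y - lam)⁻¹
            else 2 * (y - lam) / δ^2 - (y - lam)^3 / δ^4) →
        (j = 1 ∨ j = -1) →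
        ContDiff ℝ 1 f → f (-j) = 0 →
        (fχ = fun y : ℝ => f y * ((χ y : ℝ) : ℂ)) →
        ‖innI w f‖ ≤ C * |(k:ℝ)|⁻¹ * M *
          ( δ ^ (-(3:ℝ)/2) *
              (⨆ y : ↥(Set.Ioo (-1:ℝ) 1 ∩ Set.Ioo (lam - δ) (lam + δ)), ‖f (y : ℝ)‖)
            + ‖f j‖ * (|j - lam| + δ) ^ (-(3:ℝ)/4) * δ ^ (-(3:ℝ)/4)
            + (nL2 fχ ^ 2 + nL2 (deriv fχ) ^ 2) ^ ((1:ℝ)/2)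
            + δ⁻¹ * nL2 fχ ) := by
  refine ⟨1 / 144, 1000, by norm_num, by norm_num, by norm_num, ?_⟩
  intro ν k ε lam δ w F f fχ χ j M hν hν1 hk hνk hε hε0 hδ hw h1 h2 hF hM0 hM hχ hj hf hfj hfχ
  have hk' : (1:ℝ) ≤ |(k:ℝ)| := by exact_mod_cast hk
  have hK : 0 < |(k:ℝ)| := by linarith
  have δ0 : 0 < δ := by rw [hδ]; positivity
  have e3 : ν = |(k:ℝ)| * δ ^ 3 := by
    rw [hδ, mul_pow, ← Real.rpow_natCast, ← Real.rpow_natCast, ← Real.rpow_mul hν.le,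
      ← Real.rpow_mul hK.le]
    norm_num
    rw [Real.rpow_neg_one]; field_simp
  have e4 : ν ^ ((1:ℝ)/3) * |(k:ℝ)| ^ ((2:ℝ)/3) = |(k:ℝ)| * δ := by
    rw [hδ, mul_left_comm, ← Real.rpow_one_add' hK.le (by norm_num)]
    norm_num
  have hδ1 : δ ≤ 1 := by
    by_contra hh
    push Not at hh
    have : 1 < δ ^ 3 := one_lt_pow₀ hh (by norm_num)
    nlinarith
  have hkδ : |(k:ℝ)| * δ ≤ 1 := by
    by_contra hh
    push Not at hh
    have h3 : 1 < (|(k:ℝ)| * δ) ^ 3 := one_lt_pow₀ hh (by norm_num)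
    have : ν * (k:ℝ) ^ 2 = (|(k:ℝ)| * δ) ^ 3 := by
      rw [e3, ← sq_abs (k:ℝ)]; ring
    linarith
  have D0 : 0 < |j - lam| + δ := by positivity
  obtain ⟨p, hp⟩ : ∃ p, p = δ ^ ((1:ℝ)/4) := ⟨_, rfl⟩
  obtain ⟨q, hq⟩ : ∃ q, q = (|j - lam| + δ) ^ ((1:ℝ)/4) := ⟨_, rfl⟩
  have p0 : 0 < p := by rw [hp]; positivity
  have q0 : 0 < q := by rw [hq]; positivity
  have pδ : p ^ 4 = δ := by
    rw [hp, ← Real.rpow_natCast, ← Real.rpow_mul δ0.le]; norm_num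
  have qD : q ^ 4 = |j - lam| + δ := by
    rw [hq, ← Real.rpow_natCast, ← Real.rpow_mul D0.le]; norm_num
  have r1 : δ ^ (-(3:ℝ)/2) = (p ^ 6)⁻¹ := by
    rw [hp, ← Real.rpow_natCast, ← Real.rpow_mul δ0.le, ← Real.rpow_neg δ0.le]; norm_num
  have r2 : δ ^ (-(3:ℝ)/4) = (p ^ 3)⁻¹ := by
    rw [hp, ← Real.rpow_natCast, ← Real.rpow_mul δ0.le, ← Real.rpow_neg δ0.le]; norm_num
  have r3 : (|j - lam| + δ) ^ (-(3:ℝ)/4) = (q ^ 3)⁻¹ := by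
    rw [hq, ← Real.rpow_natCast, ← Real.rpow_mul D0.le, ← Real.rpow_neg D0.le]; norm_num
  obtain ⟨S, hSdef⟩ : ∃ S, S = (⨆ y : ↥(Set.Ioo (-1:ℝ) 1 ∩ Set.Ioo (lam - δ) (lam + δ)),
    ‖f (y : ℝ)‖) := ⟨_, rfl⟩
  have S0 : 0 ≤ S := by rw [hSdef]; exact Real.iSup_nonneg fun y => norm_nonneg _
  have hS : ∀ y ∈ Ioo (-1:ℝ) 1, |y - lam| < δ → ‖f y‖ ≤ S := by
    intro y hy h
    rw [abs_lt] at h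
    obtain ⟨B, hB⟩ := isCompact_Icc.exists_bound_of_continuousOn (s := Icc (-1:ℝ) 1)
      hf.continuous.continuousOn
    rw [hSdef]
    refine le_ciSup (f := fun y : ↥(Set.Ioo (-1:ℝ) 1 ∩ Set.Ioo (lam - δ) (lam + δ)) => ‖f (y : ℝ)‖)
      ⟨B, ?_⟩ ⟨y, hy, by constructor <;> linarith⟩
    rintro _ ⟨z, rfl⟩
    exact hB z (Ioo_subset_Icc_self z.2.1)
  rw [← hSdef, r1, r2, r3]
  have hF' : F = fun y : ℝ => -((|(k:ℝ)| * (p ^ 4) ^ 3 : ℝ) : ℂ) *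
      (deriv (deriv w) y - (((k:ℝ) : ℂ))^2 * w y)
      + Complex.I * ((k:ℝ):ℂ) * ((y:ℂ) - (lam:ℂ)) * w y
      - ((ε * (|(k:ℝ)| * p ^ 4) : ℝ) : ℂ) * w y := by
    rw [hF, pδ, ← e3, ← e4]
    ext y
    rw [mul_assoc ε]
    simp only [Complex.ofReal_intCast]
  have main := core (k := (k:ℝ)) hw h1 h2 hM0 hM p0 q0 (by rwa [pδ]) hk' (by rwa [pδ]) hε.le hε0
    hF' (by rw [pδ]; exact hχ) hj hf hfj hfχ (by rw [pδ, qD]) S0 (by rw [pδ]; exact hS)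
  have hH : nL2 (deriv fχ) ≤ (nL2 fχ ^ 2 + nL2 (deriv fχ) ^ 2) ^ ((1:ℝ)/2) := by
    rw [← Real.sqrt_eq_rpow]
    exact Real.le_sqrt_of_sq_le (by nlinarith [sq_nonneg (nL2 fχ)])
  have n0 := nL2_nonneg (deriv fχ)
  have n1 := nL2_nonneg fχ
  have fin : |(k:ℝ)| * ‖innI w f‖ ≤ M * (1000 * ((p ^ 6)⁻¹ * S + ‖f j‖ * (q ^ 3)⁻¹ * (p ^ 3)⁻¹
      + (nL2 fχ ^ 2 + nL2 (deriv fχ) ^ 2) ^ ((1:ℝ)/2) + δ⁻¹ * nL2 fχ)) := by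
    refine main.trans (mul_le_mul_of_nonneg_left ?_ hM0)
    have u1 : S / p ^ 6 = (p ^ 6)⁻¹ * S := by ring
    have u2 : ‖f j‖ / (q ^ 3 * p ^ 3) = ‖f j‖ * (q ^ 3)⁻¹ * (p ^ 3)⁻¹ := by field_simp
    have u3 : nL2 fχ / p ^ 4 = δ⁻¹ * nL2 fχ := by rw [pδ]; ring
    have v1 : 0 ≤ (p ^ 6)⁻¹ * S := by positivity
    have v2 : 0 ≤ ‖f j‖ * (q ^ 3)⁻¹ * (p ^ 3)⁻¹ := by positivity
    have v3 : 0 ≤ δ⁻¹ * nL2 fχ := by positivity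
    rw [u1, u2, u3]
    linarith
  have fin2 := mul_le_mul_of_nonneg_left fin (inv_nonneg.2 hK.le)
  rw [← mul_assoc, inv_mul_cancel₀ hK.ne', one_mul] at fin2
  refine fin2.trans (le_of_eq ?_)
  ring
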